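/- Write m = t(d+1) + α with t ≥ 1 and 0 ≤ α ≤ d. Let σ = {b_{1}, b_{j_2}, …, b_k} ⊆ B (subscripts 1 < j_2 < … < k ≤ m) be a simplex in M, and let l ∈ {1,…,t}. Then σ ∉ 𝒮_{b_i} for all i ∈ {1,…,l(d+1)} if and only if σ satisfies property P_l. -/

import Mathlib

open Finset

/-- The graph `G_m^d` on vertex set `Fin m ⊕ Fin m` (0-based indexing):
`Sum.inl i` is the vertex `a_{i+1}` and `Sum.inr j` is the vertex `b_{j+1}` of the paper;
`a_i` is adjacent to `b_j` iff `(j - i) mod m ∈ {0, …, d-1}`. -/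
def Gmd (m d : ℕ) : SimpleGraph (Fin m ⊕ Fin m) :=
  SimpleGraph.fromRel (fun u v =>
    ∃ i j : Fin m, u = Sum.inl i ∧ v = Sum.inr j ∧ (j.val + m - i.val) % m < d)

/-- A finite set of vertices is independent iff no two of its elements are adjacent. -/
def IsInd (m d : ℕ) (σ : Finset (Fin m ⊕ Fin m)) : Prop :=
  ∀ u ∈ σ, ∀ v ∈ σ, ¬ (Gmd m d).Adj u v

/-- The face poset `P` of the independence complex `Ind (G_m^d)` (ordered by `⊆`),
including the empty simplex. -/
def faceP (m d : ℕ) : Set (Finset (Fin m ⊕ Fin m)) := {σ | IsInd m d σ}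

/-- One step of the matching construction: `S_x(T) = {σ ∈ T | x ∉ σ, σ ∪ {x} ∈ T}`. -/
def stepS {α : Type*} [DecidableEq α] (x : α) (T : Set (Finset α)) : Set (Finset α) :=
  {σ | σ ∈ T ∧ x ∉ σ ∧ insert x σ ∈ T}

/-- The survivors of one step: `T \ (S_x(T) ∪ μ_x(S_x(T)))`. -/
def stepSurv {α : Type*} [DecidableEq α] (x : α) (T : Set (Finset α)) : Set (Finset α) :=
  T \ (stepS x T ∪ (insert x) '' (stepS x T))

/-- Iterating the matching construction along a list of vertices. -/
def phase {α : Type*} [DecidableEq α] (T : Set (Finset α)) (l : List α) : Set (Finset α) :=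
  l.foldl (fun T x => stepSurv x T) T

/-- The list `a_1, …, a_m`. -/
def listA (m : ℕ) : List (Fin m ⊕ Fin m) := (List.finRange m).map Sum.inl
/-- The list `b_1, …, b_m`. -/
def listB (m : ℕ) : List (Fin m ⊕ Fin m) := (List.finRange m).map Sum.inr

/-- `S_{a_{i+1}}` (0-based `i`): the set matched with `a_{i+1}` at stage `i+1` of phase one. -/
def Sa (m d : ℕ) (i : Fin m) : Set (Finset (Fin m ⊕ Fin m)) :=
  stepS (Sum.inl i) (phase (faceP m d) ((listA m).take i.val))

/-- `M = P \ (S_1 ∪ μ_1(S_1))`, the simplices surviving phase one. -/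
def setM (m d : ℕ) : Set (Finset (Fin m ⊕ Fin m)) := phase (faceP m d) (listA m)

/-- `S_{b_{i+1}}` (0-based `i`): the set matched with `b_{i+1}` at stage `i+1` of phase two. -/
def Sb (m d : ℕ) (i : Fin m) : Set (Finset (Fin m ⊕ Fin m)) :=
  stepS (Sum.inr i) (phase (setM m d) ((listB m).take i.val))

/-- `𝒮_{a_{i+1}} = S_{a_{i+1}} ∪ μ_{a_{i+1}}(S_{a_{i+1}})`. -/
def scriptSa (m d : ℕ) (i : Fin m) : Set (Finset (Fin m ⊕ Fin m)) :=
  Sa m d i ∪ (insert (Sum.inl i)) '' (Sa m d i)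

/-- `𝒮_{b_{i+1}} = S_{b_{i+1}} ∪ μ_{b_{i+1}}(S_{b_{i+1}})`. -/
def scriptSb (m d : ℕ) (i : Fin m) : Set (Finset (Fin m ⊕ Fin m)) :=
  Sb m d i ∪ (insert (Sum.inr i)) '' (Sb m d i)

/-- The critical cells `C = P \ (S ∪ μ(S))`. -/
def setC (m d : ℕ) : Set (Finset (Fin m ⊕ Fin m)) :=
  faceP m d \ ((⋃ i : Fin m, scriptSa m d i) ∪ (⋃ i : Fin m, scriptSb m d i))

/-- The matching relation: `MatchRel σ τ` iff `τ = μ(σ)` for `σ ∈ S = S_1 ∪ S_2`. -/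
def MatchRel (m d : ℕ) (σ τ : Finset (Fin m ⊕ Fin m)) : Prop :=
  (∃ i : Fin m, σ ∈ Sa m d i ∧ τ = insert (Sum.inl i) σ) ∨
  (∃ i : Fin m, σ ∈ Sb m d i ∧ τ = insert (Sum.inr i) σ)

/-- `B_{s+1} = {b_{s+1}, b_{s+2}, …, b_{s+m-d}}` (0-based `s`, subscripts mod `m`). -/
def Bset (m d : ℕ) (s : Fin m) : Finset (Fin m ⊕ Fin m) :=
  (Finset.univ.filter (fun j : Fin m => (j.val + m - s.val) % m < m - d)).image Sum.inr

/-- `b_{n+1} ∈ σ` (0-based subscript `n`). -/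
def hasB (m : ℕ) (σ : Finset (Fin m ⊕ Fin m)) (n : ℕ) : Prop :=
  ∃ j : Fin m, j.val = n ∧ Sum.inr j ∈ σ

/-- `σ ⊆ B`. -/
def onlyB (m : ℕ) (σ : Finset (Fin m ⊕ Fin m)) : Prop :=
  ∀ v ∈ σ, ∃ j : Fin m, v = Sum.inr j

/-- Property `P_l` of the paper, with parameter `j1` (0-based: the paper's `j_1 - 1`, so
`1 ≤ j1 ≤ d`).  With 0-based subscripts `i_r = (r-1)(d+1)`, `j_r = j1 + (r-1)(d+1)` and
`k = m + j1 - (d+1)`:  σ ∈ M, σ ⊆ B, the `2l` smallest subscripts of σ are exactly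
`0 = i_1, j_1, i_2, j_2, …, i_l, j_l`, the largest subscript is `k`, and
`σ \ {b_{i_r}} ∉ M`, `σ \ {b_{j_r}} ∉ M` for all `1 ≤ r ≤ l`. -/
def propP (m d l j1 : ℕ) (σ : Finset (Fin m ⊕ Fin m)) : Prop :=
  σ ∈ setM m d ∧ onlyB m σ ∧ 1 ≤ j1 ∧ j1 ≤ d ∧
  (∀ r, 1 ≤ r → r ≤ l → hasB m σ ((r-1)*(d+1)) ∧ hasB m σ (j1 + (r-1)*(d+1))) ∧
  (∀ j : Fin m, Sum.inr j ∈ σ → j.val ≤ j1 + (l-1)*(d+1) →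
      ∃ r, 1 ≤ r ∧ r ≤ l ∧ (j.val = (r-1)*(d+1) ∨ j.val = j1 + (r-1)*(d+1))) ∧
  hasB m σ (m + j1 - (d+1)) ∧
  (∀ j : Fin m, Sum.inr j ∈ σ → j.val ≤ m + j1 - (d+1)) ∧
  (∀ r, 1 ≤ r → r ≤ l → ∀ j : Fin m,
      (j.val = (r-1)*(d+1) ∨ j.val = j1 + (r-1)*(d+1)) → σ.erase (Sum.inr j) ∉ setM m d)

/-!
Phase one leaves exactly the simplices `σ ⊆ B` whose subscripts meet every cyclic window of `d`
consecutive positions.  Let `k` be the largest subscript of such a `σ` and put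
`j = k + (d + 1) - m`.  Then `k` is, modulo `m`, the predecessor of `0` in the set
`{0, j} + (d + 1) ℤ`, the pattern, and surviving the first `n` steps of phase two means that `σ`
agrees with the pattern below `n` and that its next subscript comes no earlier than the next pattern
element.
Indeed, at a pattern element `n` the simplex must contain `n`, since it could be added, and must
need it; the preceding pattern element `q` lies in `σ`, so it needs `n` exactly when it has no
subscript in `{n + 1, …, q + d}`, where `q + (d + 1)` is the next pattern element.  At any other
position `n` the simplex does not contain `n`, and adding `n` gives a set that has not survived.
-/

section Matching

variable {α : Type*} [DecidableEq α]

theorem mem_stepSurv_iff {x : α} {T : Set (Finset α)} {σ : Finset α} :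
    σ ∈ stepSurv x T ↔ σ ∈ T ∧ (x ∉ σ → insert x σ ∉ T) ∧ (x ∈ σ → σ.erase x ∉ T) := by
  refine and_congr_right fun hT => ?_
  rw [Set.mem_union, not_or]
  refine and_congr ⟨fun h hx hi => h ⟨hT, hx, hi⟩, fun h hS => h hS.2.1 hS.2.2⟩ ⟨?_, ?_⟩
  · intro h hx he
    refine h ⟨σ.erase x, ⟨he, notMem_erase x σ, ?_⟩, insert_erase hx⟩
    rwa [insert_erase hx]
  · rintro h ⟨τ, ⟨hτ, hx, -⟩, rfl⟩
    refine h (mem_insert_self x τ) ?_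
    rwa [erase_insert hx]

theorem phase_take_succ (T : Set (Finset α)) {l : List α} {n : ℕ} (h : n < l.length) :
    phase T (l.take (n + 1)) = stepSurv l[n] (phase T (l.take n)) := by
  rw [phase, List.take_add_one, List.foldl_append, List.getElem?_eq_getElem h]
  rfl

end Matching

namespace Gmd

variable {m d : ℕ}

section PhaseOne

variable {n : ℕ} {σ : Finset (Fin m ⊕ Fin m)}

theorem phase_listA_take_succ (T : Set (Finset (Fin m ⊕ Fin m))) (h : n < m) :
    phase T ((listA m).take (n + 1)) = stepSurv (Sum.inl ⟨n, h⟩) (phase T ((listA m).take n)) := by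
  rw [phase_take_succ T (by simpa [listA] using h)]
  simp [listA]

/-- The vertex `a_i` has a neighbour in `σ`, so that `a_i` cannot be added to `σ`. -/
def IsDominated (d : ℕ) (σ : Finset (Fin m ⊕ Fin m)) (i : Fin m) : Prop :=
  ∃ j : Fin m, Sum.inr j ∈ σ ∧ (j.val + m - i.val) % m < d

theorem isInd_iff : IsInd m d σ ↔ ∀ i, Sum.inl i ∈ σ → ¬ IsDominated d σ i := by
  constructor
  · rintro h i hi ⟨j, hj, hij⟩
    refine h _ hi _ hj ?_
    rw [Gmd, SimpleGraph.fromRel_adj]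
    exact ⟨Sum.inl_ne_inr, Or.inl ⟨i, j, rfl, rfl, hij⟩⟩
  · intro h u hu v hv hadj
    rw [Gmd, SimpleGraph.fromRel_adj] at hadj
    rcases hadj with ⟨-, ⟨i, j, rfl, rfl, hij⟩ | ⟨i, j, rfl, rfl, hij⟩⟩
    · exact h i hu ⟨j, hv, hij⟩
    · exact h i hv ⟨j, hu, hij⟩

@[simp]
theorem isDominated_insert_inl {i i' : Fin m} :
    IsDominated d (insert (Sum.inl i') σ) i ↔ IsDominated d σ i := by
  simp [IsDominated]

@[simp]
theorem isDominated_erase_inl {i i' : Fin m} :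
    IsDominated d (σ.erase (Sum.inl i')) i ↔ IsDominated d σ i := by
  simp [IsDominated]

theorem isInd_insert_inl_iff {i : Fin m} :
    IsInd m d (insert (Sum.inl i) σ) ↔ ¬ IsDominated d σ i ∧ IsInd m d σ := by
  simp [isInd_iff]

theorem isInd_mono {τ : Finset (Fin m ⊕ Fin m)} (h : IsInd m d σ) (hτ : τ ⊆ σ) : IsInd m d τ :=
  fun u hu v hv => h u (hτ hu) v (hτ hv)

theorem mem_phase_listA_take_iff (hn : n ≤ m) :
    σ ∈ phase (faceP m d) ((listA m).take n) ↔
      IsInd m d σ ∧ ∀ i : Fin m, i.val < n → IsDominated d σ i := by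
  induction n generalizing σ with
  | zero => simp [phase, faceP]
  | succ n ih =>
    rw [phase_listA_take_succ _ (by omega), mem_stepSurv_iff, ih (by omega), ih (by omega),
      ih (by omega)]
    simp only [isInd_insert_inl_iff, isDominated_insert_inl, isDominated_erase_inl]
    set a : Fin m := ⟨n, by omega⟩
    constructor
    · rintro ⟨⟨hind, hdom⟩, hins, hera⟩
      refine ⟨hind, fun i hi => ?_⟩
      by_contra hi_free
      obtain rfl : i = a := Fin.ext (by
        have : ¬ i.val < n := fun h => hi_free (hdom i h)
        change i.val = n
        omega)
      by_cases hmem : Sum.inl a ∈ σ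
      · exact hera hmem ⟨isInd_mono hind (erase_subset _ _), hdom⟩
      · exact hins hmem ⟨⟨hi_free, hind⟩, hdom⟩
    · rintro ⟨hind, hdom⟩
      have ha : IsDominated d σ a := hdom a n.lt_succ_self
      exact ⟨⟨hind, fun i hi => hdom i (by omega)⟩, fun _ h => h.1.1 ha,
        fun hmem _ => isInd_iff.1 hind a hmem ha⟩

end PhaseOne

section Subscripts

variable {σ : Finset (Fin m ⊕ Fin m)}

/-- The 0-based subscripts of the vertices `b_i` in `σ`, as natural numbers smaller than `m`. -/
def subscripts (σ : Finset (Fin m ⊕ Fin m)) : Set ℕ := {n | hasB m σ n}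

theorem lt_of_mem_subscripts {x : ℕ} (hx : x ∈ subscripts σ) : x < m := by
  obtain ⟨j, rfl, -⟩ := hx
  exact j.isLt

theorem val_mem_subscripts {j : Fin m} : j.val ∈ subscripts σ ↔ Sum.inr j ∈ σ := by
  simp [subscripts, hasB, Fin.val_inj]

theorem subscripts_insert (j : Fin m) :
    subscripts (insert (Sum.inr j) σ) = insert j.val (subscripts σ) := by
  ext x
  simp [subscripts, hasB, and_or_left, exists_or, eq_comm]

theorem subscripts_erase (j : Fin m) :
    subscripts (σ.erase (Sum.inr j)) = subscripts σ \ {j.val} := by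
  ext x
  constructor
  · rintro ⟨i, rfl, hi⟩
    rw [mem_erase, Ne, Sum.inr.injEq] at hi
    exact ⟨⟨i, rfl, hi.2⟩, fun h => hi.1 (Fin.ext h)⟩
  · rintro ⟨⟨i, rfl, hi⟩, hij⟩
    exact ⟨i, rfl, mem_erase.2 ⟨fun h => hij (by rw [Sum.inr.inj h]; rfl), hi⟩⟩

theorem onlyB_insert_inr_iff {j : Fin m} : onlyB m (insert (Sum.inr j) σ) ↔ onlyB m σ := by
  simp [onlyB]

theorem onlyB_erase {v : Fin m ⊕ Fin m} (h : onlyB m σ) : onlyB m (σ.erase v) :=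
  fun u hu => h u (mem_of_mem_erase hu)

end Subscripts

section HitsWindows

variable {p : Set ℕ} {n : ℕ}

/-- Every window of `d` cyclically consecutive elements of `{0, …, m - 1}` meets `p`.  The set `p`
is meant to consist of numbers smaller than `m`; the second alternative is the part
`{0, …, s + d - m - 1}` of the window starting at `s` that wraps around. -/
def HitsWindows (m d : ℕ) (p : Set ℕ) : Prop :=
  ∀ s < m, ∃ x ∈ p, s ≤ x ∧ x < s + d ∨ x + m < s + d

theorem add_sub_mod_lt_iff {x s : ℕ} (hd : d ≤ m) (hx : x < m) (hs : s < m) :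
    (x + m - s) % m < d ↔ s ≤ x ∧ x < s + d ∨ x + m < s + d := by
  rcases le_or_gt s x with h | h
  · rw [show x + m - s = x - s + m by omega, Nat.add_mod_right, Nat.mod_eq_of_lt (by omega)]
    omega
  · rw [Nat.mod_eq_of_lt (by omega)]
    omega

theorem mem_setM_iff {σ : Finset (Fin m ⊕ Fin m)} (hd : d ≤ m) :
    σ ∈ setM m d ↔ onlyB m σ ∧ HitsWindows m d (subscripts σ) := by
  have hdom : (∀ i, IsDominated d σ i) ↔ HitsWindows m d (subscripts σ) := by
    constructor
    · intro h s hs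
      obtain ⟨j, hj, hjs⟩ := h ⟨s, hs⟩
      exact ⟨j, val_mem_subscripts.2 hj, (add_sub_mod_lt_iff hd j.isLt hs).1 hjs⟩
    · intro h i
      obtain ⟨_, ⟨j, rfl, hj⟩, hji⟩ := h i i.isLt
      exact ⟨j, hj, (add_sub_mod_lt_iff hd j.isLt i.isLt).2 hji⟩
  rw [setM, ← List.take_of_length_le (l := listA m) (i := m) (by simp [listA]),
    mem_phase_listA_take_iff le_rfl, isInd_iff, ← hdom]
  simp only [Fin.is_lt, true_imp_iff]
  refine and_congr_left fun h => ⟨fun hind => ?_, fun hB i hi => ?_⟩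
  · rintro (i | j) hv
    · exact absurd (h i) (hind i hv)
    · exact ⟨j, rfl⟩
  · obtain ⟨j, hj⟩ := hB _ hi
    exact absurd hj Sum.inl_ne_inr

theorem HitsWindows.mono {q : Set ℕ} (h : HitsWindows m d p) (hpq : p ⊆ q) :
    HitsWindows m d q := fun s hs =>
  let ⟨x, hx, hxs⟩ := h s hs
  ⟨x, hpq hx, hxs⟩

theorem exists_window_of_not_hitsWindows_sdiff_singleton (h : HitsWindows m d p)
    (hn : ¬ HitsWindows m d (p \ {n})) :
    ∃ s < m, (s ≤ n ∧ n < s + d ∨ n + m < s + d) ∧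
      ∀ x ∈ p, x ≠ n → ¬ (s ≤ x ∧ x < s + d) ∧ ¬ x + m < s + d := by
  simp only [HitsWindows, not_forall, not_exists, not_and, not_or] at hn
  obtain ⟨s, hs, havoid⟩ := hn
  have havoid' : ∀ x ∈ p, x ≠ n → ¬ (s ≤ x ∧ x < s + d) ∧ ¬ x + m < s + d := fun x hx hxn =>
    ⟨fun hw => (havoid x ⟨hx, hxn⟩).1 hw.1 hw.2, (havoid x ⟨hx, hxn⟩).2⟩
  obtain ⟨z, hz, hzs⟩ := h s hs
  obtain rfl : z = n := by
    by_contra hne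
    exact hzs.elim (havoid' z hz hne).1 (havoid' z hz hne).2
  exact ⟨s, hs, hzs, havoid'⟩

theorem HitsWindows.not_sdiff_singleton_iff {q : ℕ} (h : HitsWindows m d p) (h0 : 0 ∈ p)
    (hq : q ∈ p) (hqn : q < n) (hqm : q + d < m) (hbetween : ∀ x ∈ p, q < x → n ≤ x) :
    ¬ HitsWindows m d (p \ {n}) ↔ ∀ x ∈ p, n < x → q + d < x := by
  constructor
  · intro hn x hx hnx
    obtain ⟨s, -, hns, havoid⟩ := exists_window_of_not_hitsWindows_sdiff_singleton h hn
    have h0s := havoid 0 h0 (by omega)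
    have hqs := havoid q hq hqn.ne
    have hxs := havoid x hx hnx.ne'
    omega
  · intro hgap hhits
    obtain ⟨_, _, _⟩ := h 0 (by omega)
    obtain ⟨x, ⟨hx, hxn⟩, hxs⟩ := hhits (q + 1) (by omega)
    have hnx : n < x := lt_of_le_of_ne (hbetween x hx (by omega)) (Ne.symm hxn)
    have := hgap x hx hnx
    omega

theorem HitsWindows.not_sdiff_singleton_zero_iff {k : ℕ} (h : HitsWindows m d p)
    (hk : IsGreatest p k) (hkm : k < m) (hmk : m ≤ k + d) (hd : d < m) :
    ¬ HitsWindows m d (p \ {0}) ↔ ∀ x ∈ p, 0 < x → k + d < x + m := by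
  constructor
  · intro hn x hx hx0
    obtain ⟨s, -, hs0, havoid⟩ := exists_window_of_not_hitsWindows_sdiff_singleton h hn
    have hks := havoid k hk.1 (by omega)
    have hxs := havoid x hx hx0.ne'
    omega
  · intro hgap hhits
    have hafter (x : ℕ) (hx : x ∈ p \ {0}) : x ≤ k ∧ k + d < x + m :=
      ⟨hk.2 hx.1, hgap x hx.1 (Nat.pos_of_ne_zero hx.2)⟩
    rcases Nat.lt_or_ge (k + 1) m with hlt | hge
    · obtain ⟨x, hx, hxs⟩ := hhits (k + 1) hlt
      have := hafter x hx
      omega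
    · obtain ⟨x, hx, hxs⟩ := hhits 0 (by omega)
      have := hafter x hx
      omega

end HitsWindows

section Pattern

variable {j n r x : ℕ}

/-- The set `{0, j} + (d + 1) ℕ` (for `j ≤ d`) of the 0-based positions `i_r` and `j_r` of the
paper, whose `j_1` is `j + 1` here. -/
def pattern (d j : ℕ) : Set ℕ := {x | x % (d + 1) = 0 ∨ x % (d + 1) = j}

theorem mul_add_mem_pattern_iff {c : ℕ} (hc : c ≤ d) :
    r * (d + 1) + c ∈ pattern d j ↔ c = 0 ∨ c = j := by
  rw [pattern, Set.mem_ofPred_eq, Nat.mul_add_mod', Nat.mod_eq_of_lt (Nat.lt_succ_of_le hc)]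

theorem mem_pattern_iff_of_le (hx : x ≤ d) : x ∈ pattern d j ↔ x = 0 ∨ x = j := by
  simpa using mul_add_mem_pattern_iff (r := 0) (j := j) hx

theorem zero_mem_pattern : 0 ∈ pattern d j := (mem_pattern_iff_of_le d.zero_le).2 (Or.inl rfl)

theorem mul_mem_pattern : r * (d + 1) ∈ pattern d j :=
  (mul_add_mem_pattern_iff d.zero_le).2 (Or.inl rfl)

theorem mul_add_mem_pattern (hj : j ≤ d) : r * (d + 1) + j ∈ pattern d j :=
  (mul_add_mem_pattern_iff hj).2 (Or.inr rfl)

theorem exists_eq_of_mem_pattern (hx : x ∈ pattern d j) :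
    ∃ r, x = r * (d + 1) ∨ x = r * (d + 1) + j := by
  refine ⟨x / (d + 1), ?_⟩
  have hdiv := Nat.div_add_mod' x (d + 1)
  rcases hx with h | h <;> omega

theorem le_of_mem_pattern (hj : j ≤ d) (hx : x ∈ pattern d j) (hx0 : x ≠ 0) : j ≤ x := by
  by_contra! hlt
  have := (mem_pattern_iff_of_le (by omega)).1 hx
  omega

theorem exists_pattern_predecessor (hj : 1 ≤ j) (hjd : j ≤ d) (hn : n ∈ pattern d j)
    (hn0 : n ≠ 0) :
    ∃ q ∈ pattern d j, q < n ∧ n < q + (d + 1) ∧ q + (d + 1) ∈ pattern d j ∧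
      ∀ y ∈ pattern d j, q < y → y < q + (d + 1) → y = n := by
  obtain ⟨r, rfl | rfl⟩ := exists_eq_of_mem_pattern hn
  · obtain ⟨r, rfl⟩ := Nat.exists_eq_add_one_of_ne_zero (left_ne_zero_of_mul hn0)
    have hsucc : (r + 1) * (d + 1) = r * (d + 1) + (d + 1) := Nat.succ_mul r (d + 1)
    refine ⟨r * (d + 1) + j, mul_add_mem_pattern hjd, by omega, by omega, ?_, ?_⟩
    · rw [show r * (d + 1) + j + (d + 1) = (r + 1) * (d + 1) + j by omega]
      exact mul_add_mem_pattern hjd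
    · intro y hy hqy hyq
      rcases Nat.lt_or_ge y ((r + 1) * (d + 1)) with hlt | hge
      · obtain ⟨c, rfl⟩ := Nat.exists_eq_add_of_le (show r * (d + 1) ≤ y by omega)
        have := (mul_add_mem_pattern_iff (by omega)).1 hy
        omega
      · obtain ⟨c, rfl⟩ := Nat.exists_eq_add_of_le hge
        have := (mul_add_mem_pattern_iff (by omega)).1 hy
        omega
  · refine ⟨r * (d + 1), mul_mem_pattern, by omega, by omega, ?_, ?_⟩
    · rw [← Nat.succ_mul]
      exact mul_mem_pattern
    · intro y hy hqy hyq
      obtain ⟨c, rfl⟩ := Nat.exists_eq_add_of_lt hqy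
      have := (mul_add_mem_pattern_iff (c := c + 1) (by omega)).1 hy
      omega

theorem sub_one_mul_add_self {l : ℕ} (hl : 1 ≤ l) (c : ℕ) : (l - 1) * c + c = l * c := by
  rw [← Nat.succ_mul, Nat.succ_eq_add_one, Nat.sub_add_cancel hl]

theorem mem_pattern_and_lt_iff {l : ℕ} (hj : j ≤ d) :
    x ∈ pattern d j ∧ x < l * (d + 1) ↔
      ∃ r, 1 ≤ r ∧ r ≤ l ∧ (x = (r - 1) * (d + 1) ∨ x = j + (r - 1) * (d + 1)) := by
  constructor
  · rintro ⟨hx, hlt⟩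
    obtain ⟨r, hr⟩ := exists_eq_of_mem_pattern hx
    have hrl : r < l := Nat.lt_of_mul_lt_mul_right (show r * (d + 1) < l * (d + 1) by omega)
    refine ⟨r + 1, Nat.le_add_left 1 r, hrl, ?_⟩
    rwa [Nat.add_sub_cancel, add_comm j]
  · rintro ⟨_ | r, hr, hrl, hx⟩
    · omega
    have hle : r * (d + 1) + (d + 1) ≤ l * (d + 1) := by
      rw [← Nat.succ_mul]
      exact Nat.mul_le_mul_right _ hrl
    rw [Nat.add_sub_cancel, add_comm j] at hx
    refine ⟨?_, by omega⟩
    rcases hx with rfl | rfl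
    exacts [mul_mem_pattern, mul_add_mem_pattern hj]

theorem add_le_add_of_mem_pattern {l : ℕ} (hj : j ≤ d) (hx : x ∈ pattern d j)
    (hxl : x < l * (d + 1)) : x + (d + 1) ≤ l * (d + 1) + j := by
  obtain ⟨r, hr, hrl, hxr⟩ := (mem_pattern_and_lt_iff hj).1 ⟨hx, hxl⟩
  have hle : (r - 1) * (d + 1) + (d + 1) ≤ l * (d + 1) := by
    rw [sub_one_mul_add_self hr]
    exact Nat.mul_le_mul_right _ hrl
  omega

end Pattern

section FollowsPattern

variable {j l n : ℕ} {p : Set ℕ}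

/-- The set `p` agrees with `pattern d j` below `n`, its next element comes no earlier than that of
the pattern, and its largest element is congruent modulo `m` to `j - (d + 1)`, the predecessor
of `0` in the pattern extended to the integers. -/
structure FollowsPattern (m d j n : ℕ) (p : Set ℕ) : Prop where
  one_le : 1 ≤ j
  le : j ≤ d
  mem_iff : ∀ x < n, x ∈ p ↔ x ∈ pattern d j
  exists_mem_pattern_le : ∀ x ∈ p, n ≤ x → ∃ y ∈ pattern d j, n ≤ y ∧ y ≤ x
  isGreatest : IsGreatest p (m + j - (d + 1))

theorem FollowsPattern.anti {n' : ℕ} (h : FollowsPattern m d j n' p) (hn : n ≤ n') :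
    FollowsPattern m d j n p where
  __ := h
  mem_iff x hx := h.mem_iff x (hx.trans_le hn)
  exists_mem_pattern_le x hx hnx := by
    rcases Nat.lt_or_ge x n' with hlt | hge
    · exact ⟨x, (h.mem_iff x hlt).1 hx, hnx, le_rfl⟩
    · obtain ⟨y, hy, hny, hyx⟩ := h.exists_mem_pattern_le x hx hge
      exact ⟨y, hy, hn.trans hny, hyx⟩

theorem FollowsPattern.extend {n' : ℕ} (h : FollowsPattern m d j n p)
    (hgap : ∀ y ∈ pattern d j, n ≤ y → n' ≤ y) : FollowsPattern m d j n' p where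
  __ := h
  mem_iff x hx := by
    rcases Nat.lt_or_ge x n with hlt | hge
    · exact h.mem_iff x hlt
    · refine iff_of_false (fun hxp => ?_) (fun hxp => (hgap x hxp hge).not_gt hx)
      obtain ⟨y, hy, hny, hyx⟩ := h.exists_mem_pattern_le x hxp hge
      exact ((hgap y hy hny).trans hyx).not_gt hx
  exists_mem_pattern_le x hx hnx := by
    by_contra! hnone
    rcases Nat.lt_or_ge x n with hlt | hge
    · exact (hnone x ((h.mem_iff x hlt).1 hx) hnx).false
    · obtain ⟨y, hy, hny, hyx⟩ := h.exists_mem_pattern_le x hx hge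
      exact (hnone y hy (hgap y hy hny)).not_ge hyx

theorem FollowsPattern.succ (h : FollowsPattern m d j n p) (hn : n ∈ pattern d j) (hnp : n ∈ p)
    (hgap : ∀ x ∈ p, n < x → ∃ y ∈ pattern d j, n < y ∧ y ≤ x) :
    FollowsPattern m d j (n + 1) p where
  __ := h
  mem_iff x hx := by
    rcases Nat.lt_succ_iff_lt_or_eq.1 hx with hlt | rfl
    · exact h.mem_iff x hlt
    · exact iff_of_true hnp hn
  exists_mem_pattern_le := hgap

theorem FollowsPattern.succ_iff {s : ℕ} (h : FollowsPattern m d j n p) (hn : n ∈ pattern d j)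
    (hnp : n ∈ p) (hs : s ∈ pattern d j) (hns : n < s)
    (hnext : ∀ y ∈ pattern d j, n < y → s ≤ y) :
    FollowsPattern m d j (n + 1) p ↔ ∀ x ∈ p, n < x → s ≤ x := by
  constructor
  · intro h' x hx hnx
    obtain ⟨y, hy, hny, hyx⟩ := h'.exists_mem_pattern_le x hx hnx
    exact (hnext y hy hny).trans hyx
  · exact fun hgap => h.succ hn hnp fun x hx hnx => ⟨s, hs, hns, hgap x hx hnx⟩

theorem FollowsPattern.not_hitsWindows_sdiff_singleton_iff (hm : l * (d + 1) ≤ m)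
    (hnl : n < l * (d + 1)) (hp : HitsWindows m d p) (h : FollowsPattern m d j n p)
    (hn : n ∈ pattern d j) (hnp : n ∈ p) :
    ¬ HitsWindows m d (p \ {n}) ↔ FollowsPattern m d j (n + 1) p := by
  have hj := h.one_le
  have hjd := h.le
  have hdm : d + 1 ≤ m :=
    (Nat.le_of_dvd (Nat.zero_lt_of_lt hnl) (Nat.dvd_mul_left _ l)).trans hm
  rcases eq_or_ne n 0 with rfl | hn0
  · have hnext : ∀ y ∈ pattern d j, 0 < y → j ≤ y := fun y hy hy0 =>
      le_of_mem_pattern hjd hy hy0.ne'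
    rw [hp.not_sdiff_singleton_zero_iff h.isGreatest (by omega) (by omega) hdm,
      h.succ_iff hn hnp ((mem_pattern_iff_of_le hjd).2 (Or.inr rfl)) hj hnext]
    exact forall₃_congr fun x _ _ => by omega
  · obtain ⟨q, hq, hqn, hnq, hqs, huniq⟩ := exists_pattern_predecessor hj hjd hn hn0
    have hqm : q + d < m := by
      by_contra! hlt
      have := huniq _ (mul_mem_pattern (r := l)) (by omega) (by omega)
      omega
    have hbetween (x : ℕ) (hx : x ∈ p) (hqx : q < x) : n ≤ x := by
      by_contra! hxn
      have := huniq x ((h.mem_iff x hxn).1 hx) hqx (by omega)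
      omega
    have hnext (y : ℕ) (hy : y ∈ pattern d j) (hny : n < y) : q + (d + 1) ≤ y := by
      by_contra! hlt
      have := huniq y hy (by omega) hlt
      omega
    have h0 : 0 ∈ p := (h.mem_iff 0 (Nat.pos_of_ne_zero hn0)).2 zero_mem_pattern
    rw [hp.not_sdiff_singleton_iff h0 ((h.mem_iff q hqn).2 hq) hqn hqm hbetween,
      h.succ_iff hn hnp hqs hnq hnext]
    rfl

theorem FollowsPattern.insert_of_mem (hm : l * (d + 1) ≤ m) (hnl : n < l * (d + 1))
    (h : FollowsPattern m d j n p) (hn : n ∈ pattern d j) :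
    FollowsPattern m d j n (insert n p) where
  __ := h
  mem_iff x hx := by rw [Set.mem_insert_iff, or_iff_right hx.ne, h.mem_iff x hx]
  exists_mem_pattern_le _ _ hnx := ⟨n, hn, le_rfl, hnx⟩
  isGreatest := by
    have hle : n ≤ m + j - (d + 1) := by
      have := add_le_add_of_mem_pattern h.le hn hnl
      omega
    simpa only [max_eq_right hle] using h.isGreatest.insert n

theorem FollowsPattern.sdiff_singleton (hm : l * (d + 1) ≤ m) (hnl : n < l * (d + 1))
    (hp : HitsWindows m d (p \ {n})) (h : FollowsPattern m d j n p) (hn : n ∈ pattern d j)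
    (hnp : n ∈ p) : FollowsPattern m d j n (p \ {n}) where
  __ := h
  mem_iff x hx := by
    rw [← h.mem_iff x hx]
    exact and_iff_left hx.ne
  exists_mem_pattern_le x hx := h.exists_mem_pattern_le x hx.1
  isGreatest := by
    refine ⟨⟨h.isGreatest.1, fun hmax => ?_⟩, fun x hx => h.isGreatest.2 hx.1⟩
    have hsucc : FollowsPattern m d j (n + 1) p := h.succ hn hnp fun x hx hnx =>
      absurd (hmax ▸ h.isGreatest.2 hx : x ≤ n) hnx.not_ge
    exact (h.not_hitsWindows_sdiff_singleton_iff hm hnl (hp.mono Set.sdiff_subset) hn hnp).2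
      hsucc hp

theorem FollowsPattern.not_insert {j' : ℕ} (hdm : d + 1 ≤ m) (h : FollowsPattern m d j n p)
    (hn : n ∉ pattern d j) : ¬ FollowsPattern m d j' n (insert n p) := by
  intro h'
  have hj := h.one_le
  have hjd := h.le
  have hj_eq : j = j' := by
    rcases Nat.lt_or_ge j n with hlt | hge
    · have hjp : j ∈ p := (h.mem_iff j hlt).2 ((mem_pattern_iff_of_le hjd).2 (Or.inr rfl))
      have hjpat' : j ∈ pattern d j' := (h'.mem_iff j hlt).1 (Set.mem_insert_of_mem n hjp)
      have := (mem_pattern_iff_of_le hjd).1 hjpat'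
      omega
    · have hle : n ≤ m + j - (d + 1) := by omega
      have hmax := (h.isGreatest.insert n).unique h'.isGreatest
      rw [max_eq_right hle] at hmax
      omega
  subst hj_eq
  obtain ⟨y, hy, hny, hyn⟩ := h'.exists_mem_pattern_le n (Set.mem_insert n p) le_rfl
  exact hn (le_antisymm hny hyn ▸ hy)

theorem exists_followsPattern_zero (hdm : d + 1 ≤ m) (hpm : ∀ x ∈ p, x < m)
    (hp : HitsWindows m d p) : ∃ j, FollowsPattern m d j 0 p := by
  obtain ⟨x, hx, hxd⟩ := hp 0 (by omega)
  obtain ⟨k, hk⟩ : ∃ k, IsGreatest p k :=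
    ⟨sSup p, Nat.sSup_mem ⟨x, hx⟩ ⟨m, fun y hy => (hpm y hy).le⟩,
      fun y hy => le_csSup ⟨m, fun z hz => (hpm z hz).le⟩ hy⟩
  have hkm : k < m := hpm k hk.1
  have hmk : m ≤ k + d := by
    obtain ⟨y, hy, hys⟩ := hp (m - d) (by omega)
    have : y ≤ k := hk.2 hy
    omega
  refine ⟨k + (d + 1) - m, by omega, by omega, fun _ h => absurd h (Nat.not_lt_zero _),
    fun x _ _ => ⟨0, zero_mem_pattern, le_rfl, x.zero_le⟩, ?_⟩
  rwa [show m + (k + (d + 1) - m) - (d + 1) = k by omega]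

end FollowsPattern

section PhaseTwo

variable {j l n : ℕ} {p : Set ℕ} {σ : Finset (Fin m ⊕ Fin m)}

/-- The sets of subscripts of the simplices that survive the first `n` steps of phase two, as shown
in `mem_phase_listB_take_iff`. -/
def survivors (m d n : ℕ) : Set (Set ℕ) :=
  {p | HitsWindows m d p ∧ ∃ j, FollowsPattern m d j n p}

theorem followsPattern_succ_iff (hm : l * (d + 1) ≤ m) (hnl : n < l * (d + 1))
    (hp : HitsWindows m d p) (h : FollowsPattern m d j n p) :
    FollowsPattern m d j (n + 1) p ↔
      (n ∉ p → insert n p ∉ survivors m d n) ∧ (n ∈ p → p \ {n} ∉ survivors m d n) := by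
  by_cases hn : n ∈ pattern d j
  · by_cases hnp : n ∈ p
    · have hsurv : p \ {n} ∈ survivors m d n ↔ HitsWindows m d (p \ {n}) :=
        ⟨And.left, fun hp' => ⟨hp', j, h.sdiff_singleton hm hnl hp' hn hnp⟩⟩
      simp only [hnp, not_true_eq_false, false_imp_iff, true_imp_iff, true_and, hsurv,
        h.not_hitsWindows_sdiff_singleton_iff hm hnl hp hn hnp]
    · refine iff_of_false (fun h' => hnp ((h'.mem_iff n n.lt_succ_self).2 hn)) fun hmax => ?_
      exact hmax.1 hnp ⟨hp.mono (Set.subset_insert n p), j, h.insert_of_mem hm hnl hn⟩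
  · have hsucc : FollowsPattern m d j (n + 1) p := h.extend fun y hy hny =>
      lt_of_le_of_ne hny fun hyn => hn (hyn ▸ hy)
    have hdm : d + 1 ≤ m :=
      (Nat.le_of_dvd (Nat.zero_lt_of_lt hnl) (Nat.dvd_mul_left _ l)).trans hm
    exact iff_of_true hsucc ⟨fun _ ⟨_, _, h'⟩ => h.not_insert hdm hn h',
      fun hnp => absurd ((hsucc.mem_iff n n.lt_succ_self).1 hnp) hn⟩

theorem mem_survivors_succ_iff (hm : l * (d + 1) ≤ m) (hnl : n < l * (d + 1)) :
    p ∈ survivors m d (n + 1) ↔ p ∈ survivors m d n ∧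
      (n ∉ p → insert n p ∉ survivors m d n) ∧ (n ∈ p → p \ {n} ∉ survivors m d n) := by
  constructor
  · rintro ⟨hp, j, h⟩
    have h' : FollowsPattern m d j n p := h.anti n.le_succ
    exact ⟨⟨hp, j, h'⟩, (followsPattern_succ_iff hm hnl hp h').1 h⟩
  · rintro ⟨⟨hp, j, h⟩, hmax⟩
    exact ⟨hp, j, (followsPattern_succ_iff hm hnl hp h).2 hmax⟩

theorem phase_listB_take_succ (T : Set (Finset (Fin m ⊕ Fin m))) (h : n < m) :
    phase T ((listB m).take (n + 1)) = stepSurv (Sum.inr ⟨n, h⟩) (phase T ((listB m).take n)) := by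
  rw [phase_take_succ T (by simpa [listB] using h)]
  simp [listB]

theorem mem_phase_listB_take_iff (hdm : d + 1 ≤ m) (hm : l * (d + 1) ≤ m)
    (hnl : n ≤ l * (d + 1)) :
    σ ∈ phase (setM m d) ((listB m).take n) ↔ onlyB m σ ∧ subscripts σ ∈ survivors m d n := by
  induction n generalizing σ with
  | zero =>
    refine (mem_setM_iff (by omega)).trans (and_congr_right fun _ => ⟨fun hp => ⟨hp, ?_⟩, And.left⟩)
    exact exists_followsPattern_zero hdm (fun _ => lt_of_mem_subscripts) hp
  | succ n ih =>
    rw [phase_listB_take_succ _ (by omega), mem_stepSurv_iff, ih (by omega), ih (by omega),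
      ih (by omega), subscripts_insert, subscripts_erase, onlyB_insert_inr_iff,
      ← val_mem_subscripts, mem_survivors_succ_iff hm hnl, and_assoc]
    refine and_congr_right fun hB => ?_
    simp only [hB, onlyB_erase hB, true_and]

theorem forall_notMem_scriptSb_iff (hn : n ≤ m) (hM : σ ∈ setM m d) :
    (∀ i : Fin m, i.val < n → σ ∉ scriptSb m d i) ↔
      σ ∈ phase (setM m d) ((listB m).take n) := by
  induction n with
  | zero => simpa [phase] using hM
  | succ n ih =>
    rw [phase_listB_take_succ _ hn]
    refine Iff.trans ⟨fun h => ?_, fun h i hi => ?_⟩ (and_congr_left' (ih (by omega)))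
    · exact ⟨fun i hi => h i (by omega), h ⟨n, hn⟩ n.lt_succ_self⟩
    · rcases Nat.lt_succ_iff_lt_or_eq.1 hi with hlt | rfl
      · exact h.1 i hlt
      · exact h.2

end PhaseTwo

section PropertyP

variable {j l : ℕ} {σ : Finset (Fin m ⊕ Fin m)}

theorem followsPattern_of_propP (hl : 1 ≤ l) (hm : l * (d + 1) ≤ m) (h : propP m d l j σ) :
    FollowsPattern m d j (l * (d + 1)) (subscripts σ) := by
  obtain ⟨hM, hB, hj, hjd, hmem, hsmall, hk, hmax, hess⟩ := h
  have hlast := sub_one_mul_add_self hl (d + 1)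
  have hdm : d ≤ m := by omega
  set N := j + (l - 1) * (d + 1) with hN
  have hNpat : N ∈ pattern d j := by
    rw [hN, add_comm]
    exact mul_add_mem_pattern hjd
  have hfollows : FollowsPattern m d j N (subscripts σ) := by
    refine ⟨hj, hjd, fun x hx => ⟨?_, fun hxpat => ?_⟩, fun x _ hNx => ⟨N, hNpat, le_rfl, hNx⟩,
      hk, ?_⟩
    · rintro ⟨i, rfl, hi⟩
      exact ((mem_pattern_and_lt_iff hjd).2 (hsmall i hi hx.le)).1
    · obtain ⟨r, hr, hrl, rfl | rfl⟩ :=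
        (mem_pattern_and_lt_iff (l := l) hjd).1 ⟨hxpat, by omega⟩
      exacts [(hmem r hr hrl).1, (hmem r hr hrl).2]
    · rintro _ ⟨i, rfl, hi⟩
      exact hmax i hi
  have hnot : ¬ HitsWindows m d (subscripts σ \ {N}) := fun hhits => by
    refine hess l hl le_rfl ⟨N, by omega⟩ (Or.inr rfl) ((mem_setM_iff hdm).2 ⟨onlyB_erase hB, ?_⟩)
    rwa [subscripts_erase]
  have hsucc : FollowsPattern m d j (N + 1) (subscripts σ) :=
    (hfollows.not_hitsWindows_sdiff_singleton_iff hm (by omega) ((mem_setM_iff hdm).1 hM).2 hNpat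
      (hmem l hl le_rfl).2).1 hnot
  refine hsucc.extend fun y hy hNy => ?_
  by_contra! hyl
  have := add_le_add_of_mem_pattern hjd hy hyl
  omega

theorem propP_of_followsPattern (hl : 1 ≤ l) (hm : l * (d + 1) ≤ m) (hM : σ ∈ setM m d)
    (h : FollowsPattern m d j (l * (d + 1)) (subscripts σ)) : propP m d l j σ := by
  have hjd := h.le
  have hlast := sub_one_mul_add_self hl (d + 1)
  have hdm : d ≤ m := by omega
  obtain ⟨hB, hhits⟩ := (mem_setM_iff hdm).1 hM
  have hpattern {x r : ℕ} (hr : 1 ≤ r) (hrl : r ≤ l)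
      (hx : x = (r - 1) * (d + 1) ∨ x = j + (r - 1) * (d + 1)) :
      x ∈ pattern d j ∧ x < l * (d + 1) := (mem_pattern_and_lt_iff hjd).2 ⟨r, hr, hrl, hx⟩
  have hmem {x : ℕ} (hx : x ∈ pattern d j ∧ x < l * (d + 1)) : x ∈ subscripts σ :=
    (h.mem_iff x hx.2).2 hx.1
  refine ⟨hM, hB, h.one_le, hjd, fun r hr hrl => ?_, fun i hi hiN => ?_, h.isGreatest.1,
    fun i hi => h.isGreatest.2 (val_mem_subscripts.2 hi), fun r hr hrl i hi => ?_⟩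
  · exact ⟨hmem (hpattern hr hrl (Or.inl rfl)), hmem (hpattern hr hrl (Or.inr rfl))⟩
  · have hil : i.val < l * (d + 1) := by omega
    exact (mem_pattern_and_lt_iff hjd).1 ⟨(h.mem_iff i hil).1 (val_mem_subscripts.2 hi), hil⟩
  · have hipat := hpattern hr hrl hi
    rw [mem_setM_iff hdm, subscripts_erase]
    exact fun hM' => ((h.anti hipat.2.le).not_hitsWindows_sdiff_singleton_iff hm hipat.2 hhits
      hipat.1 (hmem hipat)).2 (h.anti hipat.2) hM'.2

end PropertyP

end Gmd

open Gmd in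
theorem stmt12_general {m d l : ℕ} (hl : 1 ≤ l) (hm : l * (d + 1) ≤ m)
    {σ : Finset (Fin m ⊕ Fin m)} (hM : σ ∈ setM m d) :
    (∀ i : Fin m, i.val < l * (d + 1) → σ ∉ scriptSb m d i) ↔ ∃ j1, propP m d l j1 σ := by
  have hdm : d + 1 ≤ m := (Nat.le_mul_of_pos_left _ hl).trans hm
  obtain ⟨hB, hhits⟩ := (mem_setM_iff (Nat.le_of_succ_le hdm)).1 hM
  calc (∀ i : Fin m, i.val < l * (d + 1) → σ ∉ scriptSb m d i)
      ↔ σ ∈ phase (setM m d) ((listB m).take (l * (d + 1))) := forall_notMem_scriptSb_iff hm hM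
    _ ↔ onlyB m σ ∧ subscripts σ ∈ survivors m d (l * (d + 1)) :=
      mem_phase_listB_take_iff hdm hm le_rfl
    _ ↔ ∃ j, FollowsPattern m d j (l * (d + 1)) (subscripts σ) :=
      ⟨fun h => h.2.2, fun h => ⟨hB, hhits, h⟩⟩
    _ ↔ ∃ j1, propP m d l j1 σ := exists_congr fun _ =>
      ⟨propP_of_followsPattern hl hm hM, followsPattern_of_propP hl hm⟩

/-- 0-based indices: write `m = t(d+1) + a` with `t ≥ 1`, `0 ≤ a ≤ d`.  Let
`σ = {b_0, b_{j_2}, …, b_k} ⊆ B` be a simplex in `M` and let `l ∈ {1, …, t}`.  Then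
`σ ∉ 𝒮_{b_i}` for all `i < l(d+1)` (the first `l(d+1)` vertices of `B`) iff `σ` satisfies
property `P_l` for some `j1`. -/
theorem stmt12 (m d t a l : ℕ) (hd : 1 ≤ d) (hdm : d ≤ m)
    (ht : 1 ≤ t) (ha : a ≤ d) (hm : m = t * (d + 1) + a)
    (hl : 1 ≤ l) (hlt : l ≤ t)
    (σ : Finset (Fin m ⊕ Fin m)) (hB : onlyB m σ) (hM : σ ∈ setM m d)
    (h0 : hasB m σ 0) (hcard : 2 ≤ σ.card) :
    (∀ i : Fin m, i.val < l * (d + 1) → σ ∉ scriptSb m d i) ↔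
      ∃ j1, propP m d l j1 σ := by
  have hlm : l * (d + 1) ≤ m := by grw [hlt, hm]; exact Nat.le_add_right _ a
  exact stmt12_general hl hlm hM
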